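/- There exists a constant C > 0 such that the following holds. For every nae-(2,k)-Flip game G with n players, every state S_in of G, and every ε ∈ (0,1], there exists a sequence of states S_in = S_0, S_1, ..., S_T with T ≤ C·n^3·k^2/ε^4, where for each t < T the state S_{t+1} is obtained from S_t by flipping the variable of a single player j_t ∈ N with u_{j_t}(S_{t+1}) > u_{j_t}(S_t) (an improvement move), and S_T is a (3+ε)-approximate pure Nash equilibrium of G. -/

import Mathlib

/-!
The argument works in every `P_k`-Flip game. Let `U j` be the total weight of the clauses
containing `j`. By the flip property `u j S + u j (flipVar S j) ≥ U j`, so a move of `j` that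
multiplies her utility by more than `ρ` raises the potential by at least `(ρ-1)/(ρ+1) * U j`
(`gain_of_ratio`).

Split the players into blocks according to `U j`, block `i` consisting of the players with
`W (i+1) < U j ≤ W i`, where `W (i+1) = r * W i` and `r` is of order `ε²/n`. In phase `i` the players
of block `i` make moves of ratio `q = 3 + ε/2` and the players of block `i+1` make moves of ratio
`p = 1 + ε/10`, until none is left. Since the players of block `i` have no `p`-move
when phase `i` starts, each has at most about half of `U j` unsatisfied then.
Let `R` be the set of players of block `i` that move in phase `i`. The potential rises by at least
`(1/2 + ε/18) * ∑_R U`, but by at most the weight unsatisfied initially around the movers, which is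
at most `(1/2 + ε/40) * ∑_R U` plus the total `U` of block `i+1`. Hence `∑_R U` is
`O(n_{i+1} * W (i+1) / ε)`, with `n_{i+1}` the size of block `i+1` (`phase`).

This has two consequences. The phase has `O(n_{i+1} / (r * ε²))` moves, which sums to `O(n²/ε⁴)` over
all phases. And the phase changes the utility of any player by only `O(n * W (i+1) / ε)`; over all
phases after the one in which `j` stopped moving these changes sum to a small multiple of
`ε * U j`, so the ratio `q` degrades to at most `3 + ε`.
-/

/-- A `P_k`-Flip game: boolean variables `V`, player-controlled variables `N ⊆ V`
(variables outside `N` are frozen), and clauses `C` with nonnegative weights,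
at most `k` variables each, satisfaction predicates depending only on their own
variables, and the flip property: an unsatisfied clause becomes satisfied when
any one of its variables is flipped. -/
structure PkFlipGame (V C : Type) [Fintype V] [DecidableEq V] [Fintype C] (k : ℕ) where
  /-- the player-controlled variables -/
  N : Finset V
  /-- frozen values for the variables outside `N` -/
  frozen : V → Bool
  /-- clause weights -/
  w : C → ℝ
  w_nonneg : ∀ c, 0 ≤ w c
  /-- the variables of each clause -/
  vars : C → Finset V
  vars_card_le : ∀ c, (vars c).card ≤ k
  /-- the satisfaction predicate of each clause -/
  sat : C → (V → Bool) → Bool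
  sat_depends : ∀ c (S S' : V → Bool), (∀ v ∈ vars c, S v = S' v) → sat c S = sat c S'
  flip_sat : ∀ c (S : V → Bool) (j : V), j ∈ vars c → sat c S = false →
    sat c (Function.update S j (!S j)) = true

variable {V C : Type} [Fintype V] [DecidableEq V] [Fintype C] {k : ℕ}

/-- The state obtained from `S` by flipping the value of variable `j`. -/
def flipVar (S : V → Bool) (j : V) : V → Bool := Function.update S j (!S j)

namespace PkFlipGame

/-- A state of the game: agrees with the frozen values outside `N`. -/
def IsState (G : PkFlipGame V C k) (S : V → Bool) : Prop :=
  ∀ v, v ∉ G.N → S v = G.frozen v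

/-- Utility of player `j`: total weight of satisfied clauses containing `j`'s variable. -/
def util (G : PkFlipGame V C k) (j : V) (S : V → Bool) : ℝ :=
  ∑ c ∈ Finset.univ.filter (fun c => j ∈ G.vars c ∧ G.sat c S = true), G.w c

/-- The potential: total weight of satisfied clauses. -/
def potential (G : PkFlipGame V C k) (S : V → Bool) : ℝ :=
  ∑ c ∈ Finset.univ.filter (fun c => G.sat c S = true), G.w c

/-- Maximum possible utility `U_j` of player `j`: total weight of clauses containing `j`. -/
def maxUtil (G : PkFlipGame V C k) (j : V) : ℝ :=
  ∑ c ∈ Finset.univ.filter (fun c => j ∈ G.vars c), G.w c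

/-- The subgame potential `Φ_R`: total weight of satisfied clauses containing a
variable of some player in `R`. -/
def subPotential (G : PkFlipGame V C k) (R : Finset V) (S : V → Bool) : ℝ :=
  ∑ c ∈ Finset.univ.filter (fun c => G.sat c S = true ∧ ∃ j ∈ R, j ∈ G.vars c), G.w c

/-- A `ρ`-approximate pure Nash equilibrium: a state where no player can increase
her utility by more than a factor `ρ` by flipping her variable. -/
def IsApproxEquilibrium (G : PkFlipGame V C k) (ρ : ℝ) (S : V → Bool) : Prop :=
  G.IsState S ∧ ∀ j ∈ G.N, G.util j (flipVar S j) ≤ ρ * G.util j S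

/-- A pure Nash equilibrium: no player can strictly increase her utility. -/
def IsPNE (G : PkFlipGame V C k) (S : V → Bool) : Prop :=
  G.IsState S ∧ ∀ j ∈ G.N, G.util j (flipVar S j) ≤ G.util j S

end PkFlipGame

/-- Value of a literal `(v, neg)` under a state `S`: `S v`, negated if `neg`. -/
def litVal (S : V → Bool) (l : V × Bool) : Bool := xor (S l.1) l.2

/-- A `nae`-`(kbar, k)`-Flip game: a `P_k`-Flip game whose clauses are
not-all-equal clauses with at least `kbar` and at most `k` literals over
distinct variables; a clause is satisfied iff two of its literals differ. -/
structure NaeFlipGame (V C : Type) [Fintype V] [DecidableEq V] [Fintype C] (kbar k : ℕ)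
    extends PkFlipGame V C k where
  /-- the list of literals of each clause -/
  lits : C → List (V × Bool)
  lits_length_lb : ∀ c, kbar ≤ (lits c).length
  lits_length_ub : ∀ c, (lits c).length ≤ k
  lits_nodup : ∀ c, ((lits c).map Prod.fst).Nodup
  vars_eq : ∀ c, vars c = ((lits c).map Prod.fst).toFinset
  sat_iff : ∀ c (S : V → Bool), sat c S = true ↔
    ∃ l₁ ∈ lits c, ∃ l₂ ∈ lits c, litVal S l₁ ≠ litVal S l₂

namespace PkFlipGame

/-! ### Utilities and the potential -/

lemma util_eq (G : PkFlipGame V C k) (j : V) (S : V → Bool) :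
    G.util j S = ∑ c, if j ∈ G.vars c ∧ G.sat c S = true then G.w c else 0 := by
  rw [util, Finset.sum_filter]

lemma maxUtil_eq (G : PkFlipGame V C k) (j : V) :
    G.maxUtil j = ∑ c, if j ∈ G.vars c then G.w c else 0 := by
  rw [maxUtil, Finset.sum_filter]

lemma potential_eq (G : PkFlipGame V C k) (S : V → Bool) :
    G.potential S = ∑ c, if G.sat c S = true then G.w c else 0 := by
  rw [potential, Finset.sum_filter]

lemma util_nonneg (G : PkFlipGame V C k) (j : V) (S : V → Bool) : 0 ≤ G.util j S :=
  Finset.sum_nonneg fun c _ => G.w_nonneg c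

lemma maxUtil_nonneg (G : PkFlipGame V C k) (j : V) : 0 ≤ G.maxUtil j :=
  Finset.sum_nonneg fun c _ => G.w_nonneg c

lemma util_le_maxUtil (G : PkFlipGame V C k) (j : V) (S : V → Bool) :
    G.util j S ≤ G.maxUtil j := by
  rw [util_eq, maxUtil_eq]
  refine Finset.sum_le_sum fun c _ => ?_
  have := G.w_nonneg c
  split_ifs <;> first | linarith | tauto

/-- Every clause containing `j` is satisfied before or after `j` flips. -/
lemma maxUtil_le (G : PkFlipGame V C k) (j : V) (S : V → Bool) :
    G.maxUtil j ≤ G.util j S + G.util j (flipVar S j) := by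
  rw [util_eq, util_eq, maxUtil_eq, ← Finset.sum_add_distrib]
  refine Finset.sum_le_sum fun c _ => ?_
  have hw := G.w_nonneg c
  by_cases hj : j ∈ G.vars c
  · cases hs : G.sat c S
    · have := G.flip_sat c S j hj hs
      simp [hj, flipVar, this]
    · simp only [hj, and_self, if_true]
      split_ifs <;> linarith
  · simp [hj]

lemma potential_flip (G : PkFlipGame V C k) (j : V) (S : V → Bool) :
    G.potential (flipVar S j) - G.potential S = G.util j (flipVar S j) - G.util j S := by
  rw [util_eq, util_eq, potential_eq, potential_eq, ← Finset.sum_sub_distrib,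
    ← Finset.sum_sub_distrib]
  refine Finset.sum_congr rfl fun c _ => ?_
  by_cases hj : j ∈ G.vars c
  · simp [hj]
  · have : G.sat c (flipVar S j) = G.sat c S := by
      apply G.sat_depends
      intro v hv
      have : v ≠ j := by rintro rfl; exact hj hv
      simp [flipVar, this]
    simp [hj, this]

lemma sat_eq_or (G : PkFlipGame V C k) {X : Finset V} {S S' : V → Bool}
    (h : ∀ v, v ∉ X → S v = S' v) (c : C) :
    G.sat c S = G.sat c S' ∨ ∃ x ∈ X, x ∈ G.vars c := by
  by_cases hx : ∃ x ∈ X, x ∈ G.vars c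
  · exact Or.inr hx
  · push Not at hx
    exact Or.inl (G.sat_depends c S S' fun v hv => h v fun hvX => hx v hvX hv)

/-- Changing the variables in `X` changes a utility only through clauses meeting `X`. -/
lemma util_diff (G : PkFlipGame V C k) (j : V) {X : Finset V} {S S' : V → Bool}
    (h : ∀ v, v ∉ X → S v = S' v) :
    G.util j S ≤ G.util j S' + ∑ x ∈ X, G.maxUtil x := by
  simp_rw [util_eq, maxUtil_eq]
  rw [Finset.sum_comm, ← Finset.sum_add_distrib]
  refine Finset.sum_le_sum fun c _ => ?_
  have hw := G.w_nonneg c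
  have hn : ∀ x ∈ X, (0 : ℝ) ≤ if x ∈ G.vars c then G.w c else 0 := by
    intro x _; split_ifs <;> linarith
  rcases G.sat_eq_or h c with he | ⟨x, hx, hxc⟩
  · rw [he]
    linarith [Finset.sum_nonneg hn]
  · have h1 := Finset.single_le_sum hn hx
    rw [if_pos hxc] at h1
    split_ifs <;> linarith

/-- Changing the variables in `X` gains at most the weight unsatisfied around `X`. -/
lemma potential_diff (G : PkFlipGame V C k) {X : Finset V} {S S' : V → Bool}
    (h : ∀ v, v ∉ X → S v = S' v) :
    G.potential S' - G.potential S ≤ ∑ x ∈ X, (G.maxUtil x - G.util x S) := by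
  simp_rw [util_eq, maxUtil_eq, potential_eq, ← Finset.sum_sub_distrib]
  rw [Finset.sum_comm]
  refine Finset.sum_le_sum fun c _ => ?_
  have hw := G.w_nonneg c
  have hn : ∀ x ∈ X, (0 : ℝ) ≤ (if x ∈ G.vars c then G.w c else 0) -
      if x ∈ G.vars c ∧ G.sat c S = true then G.w c else 0 := by
    intro x _; split_ifs <;> first | linarith | tauto
  have h0 := Finset.sum_nonneg hn
  rcases G.sat_eq_or h c with he | ⟨x, hx, hxc⟩
  · rw [he] at h0 ⊢
    simpa using h0
  · have h1 := Finset.single_le_sum hn hx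
    cases hs : G.sat c S
    · simp only [hxc, hs] at h1 ⊢
      simp at h1 ⊢
      split_ifs <;> linarith
    · simp only [hs] at h0 ⊢
      simp at h0 ⊢
      split_ifs <;> linarith

/-! ### Paths of moves -/

/-- `Path P S l S'`: flipping the variables in the list `l` one after the other leads from `S` to
`S'`, and every single move satisfies `P` (state before the move, moving variable). -/
inductive Path (P : (V → Bool) → V → Prop) : (V → Bool) → List V → (V → Bool) → Prop
  | nil (S) : Path P S [] S
  | cons {S j l S'} : P S j → Path P (flipVar S j) l S' → Path P S (j :: l) S'

lemma Path.mono {P Q : (V → Bool) → V → Prop} (hPQ : ∀ S j, P S j → Q S j)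
    {S l S'} (h : Path P S l S') : Path Q S l S' := by
  induction h with
  | nil S => exact .nil S
  | cons hp _ ih => exact .cons (hPQ _ _ hp) ih

lemma Path.append {P : (V → Bool) → V → Prop} {S l S' l' S''}
    (h : Path P S l S') (h' : Path P S' l' S'') : Path P S (l ++ l') S'' := by
  induction h with
  | nil S => exact h'
  | cons hp _ ih => exact .cons hp (ih h')

lemma Path.agree {P : (V → Bool) → V → Prop} {S l S'} (h : Path P S l S') :
    ∀ v, v ∉ l.toFinset → S v = S' v := by
  induction h with
  | nil S => simp
  | @cons S j l S' hp _ ih =>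
    intro v hv
    simp only [List.toFinset_cons, Finset.mem_insert, not_or] at hv
    rw [← ih v hv.2]
    simp [flipVar, hv.1]

lemma Path.mem {P : (V → Bool) → V → Prop} {A : Finset V} (hA : ∀ S j, P S j → j ∈ A)
    {S l S'} (h : Path P S l S') : l.toFinset ⊆ A := by
  induction h with
  | nil S => simp
  | cons hp _ ih => simpa [Finset.insert_subset_iff] using ⟨hA _ _ hp, by simpa using ih⟩

lemma Path.length_gain (G : PkFlipGame V C k) {P : (V → Bool) → V → Prop} {m : ℝ}
    (hP : ∀ S j, P S j → m ≤ G.util j (flipVar S j) - G.util j S)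
    {S l S'} (h : Path P S l S') : l.length * m ≤ G.potential S' - G.potential S := by
  induction h with
  | nil S => simp
  | @cons S j l S' hp _ ih =>
    have := hP _ _ hp
    rw [← G.potential_flip] at this
    push_cast [List.length_cons]
    linarith

lemma Path.sum_gain (G : PkFlipGame V C k) {P : (V → Bool) → V → Prop} {g : V → ℝ}
    (hg : ∀ j, 0 ≤ g j)
    (hP : ∀ S j, P S j → g j ≤ G.util j (flipVar S j) - G.util j S)
    {S l S'} (h : Path P S l S') :
    ∑ j ∈ l.toFinset, g j ≤ G.potential S' - G.potential S := by
  induction h with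
  | nil S => simp
  | @cons S j l S' hp _ ih =>
    have := hP _ _ hp
    rw [← G.potential_flip] at this
    rw [List.toFinset_cons]
    by_cases hj : j ∈ l.toFinset
    · rw [Finset.insert_eq_of_mem hj]
      linarith [hg j]
    · rw [Finset.sum_insert hj]
      linarith

/-- Improving moves cannot be continued forever: the potential increases and there are finitely
many states. -/
lemma exists_maximal_path (G : PkFlipGame V C k) {P : (V → Bool) → V → Prop}
    (hP : ∀ S j, P S j → G.util j S < G.util j (flipVar S j)) (S : V → Bool) :
    ∃ l S', Path P S l S' ∧ ∀ j, ¬ P S' j := by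
  induction hn : (Finset.univ.filter fun S' => G.potential S < G.potential S').card
    using Nat.strong_induction_on generalizing S with
  | _ n ih =>
    by_cases h : ∃ j, P S j
    · obtain ⟨j, hj⟩ := h
      have hlt : G.potential S < G.potential (flipVar S j) := by
        linarith [hP S j hj, G.potential_flip j S]
      have hc : (Finset.univ.filter fun S' => G.potential (flipVar S j) < G.potential S').card
          < n := by
        rw [← hn]
        apply Finset.card_lt_card
        rw [Finset.ssubset_iff_of_subset]
        · exact ⟨flipVar S j, by simpa using hlt, by simp⟩
        · intro S' hS'
          simp only [Finset.mem_filter, Finset.mem_univ, true_and] at hS' ⊢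
          linarith
      obtain ⟨l, S', hp, ht⟩ := ih _ hc _ rfl
      exact ⟨j :: l, S', .cons hj hp, ht⟩
    · push Not at h
      exact ⟨[], S, .nil S, h⟩

/-- An improvement move of a player. -/
def Improving (G : PkFlipGame V C k) (S : V → Bool) (j : V) : Prop :=
  j ∈ G.N ∧ G.util j S < G.util j (flipVar S j)

lemma Path.exists_seq (G : PkFlipGame V C k) {S l S'} (h : Path G.Improving S l S') :
    ∃ Sq : ℕ → V → Bool, Sq 0 = S ∧ Sq l.length = S' ∧
      ∀ t < l.length, ∃ j ∈ G.N, Sq (t + 1) = flipVar (Sq t) j ∧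
        G.util j (Sq t) < G.util j (Sq (t + 1)) := by
  induction h with
  | nil S => exact ⟨fun _ => S, rfl, rfl, by simp⟩
  | @cons S j l S' hp _ ih =>
    obtain ⟨Sq, h0, hl, hs⟩ := ih
    refine ⟨fun t => match t with | 0 => S | t + 1 => Sq t, rfl, hl, ?_⟩
    rintro (_ | t) ht
    · exact ⟨j, hp.1, h0, by simpa [h0] using hp.2⟩
    · exact hs t (by simpa using ht)

/-- A move multiplying the utility by more than `ρ` gains `(ρ-1)/(ρ+1) * U j`. -/
lemma gain_of_ratio (G : PkFlipGame V C k) {ρ : ℝ} (hρ : 1 ≤ ρ) {j : V} {S : V → Bool}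
    (h : ρ * G.util j S < G.util j (flipVar S j)) :
    (ρ - 1) * G.maxUtil j ≤ (ρ + 1) * (G.util j (flipVar S j) - G.util j S) := by
  have h1 := mul_le_mul_of_nonneg_left (G.maxUtil_le j S) (sub_nonneg.2 hρ)
  nlinarith

/-! ### Blocks and phases -/

/-- Block `i`: the players with `W (i+1) < U j ≤ W i`. -/
noncomputable def block (G : PkFlipGame V C k) (W : ℕ → ℝ) (i : ℕ) : Finset V :=
  G.N.filter fun j => W (i + 1) < G.maxUtil j ∧ G.maxUtil j ≤ W i

/-- The moves allowed in phase `i`: ratio `3 + ε/2` for block `i`, ratio `1 + ε/10` for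
block `i+1`. -/
def PhaseMove (G : PkFlipGame V C k) (W : ℕ → ℝ) (ε : ℝ) (i : ℕ) (S : V → Bool) (j : V) : Prop :=
  (j ∈ G.block W i ∧ (3 + ε / 2) * G.util j S < G.util j (flipVar S j)) ∨
  (j ∈ G.block W (i + 1) ∧ (1 + ε / 10) * G.util j S < G.util j (flipVar S j))

/-- What holds before phase `i`: block `i` is in `(1 + ε/10)`-equilibrium, and the players of the
earlier blocks are in `(3 + ε/2)`-equilibrium up to an additive error. The error grows with `i`
towards `2 * E * r * U j`; the term `2 * W (i+1)` is the room left for the later phases. -/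
structure PhaseInv (G : PkFlipGame V C k) (W : ℕ → ℝ) (ε r E : ℝ) (i : ℕ) (S : V → Bool) :
    Prop where
  current : ∀ j ∈ G.block W i, G.util j (flipVar S j) ≤ (1 + ε / 10) * G.util j S
  earlier : ∀ j ∈ G.N, W i < G.maxUtil j →
    G.util j (flipVar S j) ≤ (3 + ε / 2) * G.util j S + E * (2 * r * G.maxUtil j - 2 * W (i + 1))

lemma PhaseMove.mem {G : PkFlipGame V C k} {W : ℕ → ℝ} {ε : ℝ} {i : ℕ} {S : V → Bool} {j : V}
    (h : G.PhaseMove W ε i S j) : j ∈ G.block W i ∪ G.block W (i + 1) := by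
  rcases h with h | h <;> simp [h.1]

lemma PhaseMove.improving {G : PkFlipGame V C k} {W : ℕ → ℝ} {ε : ℝ} (hε : 0 < ε) {i : ℕ}
    {S : V → Bool} {j : V} (h : G.PhaseMove W ε i S j) : G.Improving S j := by
  have hu := G.util_nonneg j S
  rcases h with h | h
  · exact ⟨(Finset.mem_filter.1 h.1).1, by nlinarith [h.2]⟩
  · exact ⟨(Finset.mem_filter.1 h.1).1, by nlinarith [h.2]⟩

lemma gain_large (G : PkFlipGame V C k) {ε : ℝ} (hε : 0 < ε) (hε1 : ε ≤ 1) {S : V → Bool} {j : V}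
    (h : (3 + ε / 2) * G.util j S < G.util j (flipVar S j)) :
    (1 / 2 + ε / 18) * G.maxUtil j ≤ G.util j (flipVar S j) - G.util j S := by
  have h1 := G.gain_of_ratio (by linarith) h
  have hU := G.maxUtil_nonneg j
  have h2 : (3 + ε / 2 + 1) * ((1 / 2 + ε / 18) * G.maxUtil j) ≤ (3 + ε / 2 - 1) * G.maxUtil j := by
    rw [← mul_assoc]
    exact mul_le_mul_of_nonneg_right (by nlinarith) hU
  exact le_of_mul_le_mul_left (h2.trans h1) (by linarith)

lemma gain_small (G : PkFlipGame V C k) {ε : ℝ} (hε : 0 < ε) (hε1 : ε ≤ 1) {S : V → Bool} {j : V}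
    (h : (1 + ε / 10) * G.util j S < G.util j (flipVar S j)) :
    ε / 21 * G.maxUtil j ≤ G.util j (flipVar S j) - G.util j S := by
  have h1 := G.gain_of_ratio (by linarith) h
  have hU := G.maxUtil_nonneg j
  have h2 : (1 + ε / 10 + 1) * (ε / 21 * G.maxUtil j) ≤ (1 + ε / 10 - 1) * G.maxUtil j := by
    rw [← mul_assoc]
    exact mul_le_mul_of_nonneg_right (by nlinarith) hU
  exact le_of_mul_le_mul_left (h2.trans h1) (by linarith)

lemma unsat_le (G : PkFlipGame V C k) {ε : ℝ} (hε1 : ε ≤ 1) {S : V → Bool} {j : V}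
    (h : G.util j (flipVar S j) ≤ (1 + ε / 10) * G.util j S) :
    G.maxUtil j - G.util j S ≤ (1 / 2 + ε / 40) * G.maxUtil j := by
  have h1 := G.maxUtil_le j S
  have hu := G.util_nonneg j S
  have h2 : (1 / 2 - ε / 40) * G.maxUtil j ≤ (1 / 2 - ε / 40) * ((2 + ε / 10) * G.util j S) :=
    mul_le_mul_of_nonneg_left (by linarith) (by linarith)
  nlinarith [mul_nonneg (sq_nonneg ε) hu]

/-- The players moving in phase `i` have total `U` at most `41/ε * n_{i+1} * W (i+1)`. -/
lemma sum_movers_le (G : PkFlipGame V C k) {W : ℕ → ℝ} {ε : ℝ} (hε : 0 < ε) (hε1 : ε ≤ 1)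
    {i : ℕ} {S S' : V → Bool} {l : List V}
    (hcur : ∀ j ∈ G.block W i, G.util j (flipVar S j) ≤ (1 + ε / 10) * G.util j S)
    (hp : Path (G.PhaseMove W ε i) S l S') :
    ε * ∑ x ∈ l.toFinset, G.maxUtil x ≤ 41 * ((G.block W (i + 1)).card * W (i + 1)) := by
  classical
  set X := l.toFinset with hX
  set R := X.filter (· ∈ G.block W i) with hR
  set Q := X.filter (¬ · ∈ G.block W i) with hQ
  have hsplit (f : V → ℝ) : ∑ x ∈ X, f x = ∑ x ∈ R, f x + ∑ x ∈ Q, f x :=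
    (Finset.sum_filter_add_sum_filter_not X _ f).symm
  have hQsub : Q ⊆ G.block W (i + 1) := by
    intro x hx
    rw [hQ, Finset.mem_filter] at hx
    have := hp.mem (fun _ _ h => h.mem) hx.1
    rw [Finset.mem_union] at this
    tauto
  have hQsum : ∑ x ∈ Q, G.maxUtil x ≤ (G.block W (i + 1)).card * W (i + 1) := by
    calc ∑ x ∈ Q, G.maxUtil x ≤ ∑ x ∈ G.block W (i + 1), G.maxUtil x :=
          Finset.sum_le_sum_of_subset_of_nonneg hQsub fun x _ _ => G.maxUtil_nonneg x
      _ ≤ ∑ x ∈ G.block W (i + 1), W (i + 1) :=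
          Finset.sum_le_sum fun x hx => (Finset.mem_filter.1 hx).2.2
      _ = _ := by simp
  have hlow := hp.sum_gain G
    (g := fun j => if j ∈ G.block W i then (1 / 2 + ε / 18) * G.maxUtil j else 0)
    (fun j => by
      have := G.maxUtil_nonneg j
      split_ifs <;> positivity)
    (fun T j h => by
      split_ifs with hj
      · rcases h with h | h
        · exact G.gain_large hε hε1 h.2
        · -- impossible: being in both blocks means `W (i+1) < U j ≤ W (i+1)`
          have h1 := (Finset.mem_filter.1 hj).2.1
          have h2 := (Finset.mem_filter.1 h.1).2.2
          linarith
      · exact sub_nonneg.2 (h.improving hε).2.le)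
  have hlow' : (1 / 2 + ε / 18) * ∑ x ∈ R, G.maxUtil x ≤ G.potential S' - G.potential S := by
    rw [Finset.mul_sum, hR, Finset.sum_filter]
    exact hlow
  have hup := G.potential_diff hp.agree
  rw [← hX, hsplit] at hup
  have hupR : ∑ x ∈ R, (G.maxUtil x - G.util x S) ≤ (1 / 2 + ε / 40) * ∑ x ∈ R, G.maxUtil x := by
    rw [Finset.mul_sum]
    exact Finset.sum_le_sum fun x hx =>
      G.unsat_le hε1 (hcur x (Finset.mem_filter.1 hx).2)
  have hupQ : ∑ x ∈ Q, (G.maxUtil x - G.util x S) ≤ ∑ x ∈ Q, G.maxUtil x :=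
    Finset.sum_le_sum fun x _ => by linarith [G.util_nonneg x S]
  have hR0 : 0 ≤ ∑ x ∈ R, G.maxUtil x := Finset.sum_nonneg fun x _ => G.maxUtil_nonneg x
  have hQ0 : 0 ≤ ∑ x ∈ Q, G.maxUtil x := Finset.sum_nonneg fun x _ => G.maxUtil_nonneg x
  rw [hsplit]
  generalize ∑ x ∈ R, G.maxUtil x = A at *
  generalize ∑ x ∈ Q, G.maxUtil x = B at *
  have hεA : ε * A ≤ 40 * B := by nlinarith
  nlinarith

lemma phase (G : PkFlipGame V C k) {W : ℕ → ℝ} {ε r E : ℝ} (hε : 0 < ε) (hε1 : ε ≤ 1)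
    (hr : 0 < r) (hr2 : r ≤ 1 / 2) (hW : ∀ i, W (i + 1) = r * W i) (hW0 : ∀ i, 0 < W i)
    (hE : E * ε = 185 * G.N.card) {i : ℕ} {S : V → Bool} (hS : G.PhaseInv W ε r E i S) :
    ∃ l S', Path G.Improving S l S' ∧ G.PhaseInv W ε r E (i + 1) S' ∧
      (l.length : ℝ) * (ε ^ 2 * r) ≤ 861 * (G.block W (i + 1)).card := by
  obtain ⟨l, S', hp, ht⟩ := G.exists_maximal_path
    (fun S j h => (PhaseMove.improving (W := W) (i := i) hε h).2) S
  have hE0 : 0 ≤ E := nonneg_of_mul_nonneg_left (hE ▸ by positivity) hε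
  have hsum := G.sum_movers_le hε hε1 hS.current hp
  set H := ∑ x ∈ l.toFinset, G.maxUtil x with hH
  have hWi := hW0 (i + 1)
  have hWs := hW (i + 1)
  refine ⟨l, S', hp.mono fun _ _ h => h.improving hε, ⟨?_, ?_⟩, ?_⟩
  · intro j hj
    by_contra hcon
    exact ht j (Or.inr ⟨hj, not_le.1 hcon⟩)
  · intro j hjN hj
    by_cases hji : G.maxUtil j ≤ W i
    · have hle : G.util j (flipVar S' j) ≤ (3 + ε / 2) * G.util j S' := by
        by_contra hcon
        exact ht j (Or.inl ⟨Finset.mem_filter.2 ⟨hjN, hj, hji⟩, not_le.1 hcon⟩)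
      have : 0 ≤ E * (2 * r * G.maxUtil j - 2 * W (i + 1 + 1)) := by
        apply mul_nonneg hE0
        rw [hWs]
        nlinarith
      linarith
    · have h0 := hS.earlier j hjN (not_le.1 hji)
      have h1 : G.util j S ≤ G.util j S' + H := G.util_diff j hp.agree
      have h2 : G.util j (flipVar S' j) ≤ G.util j (flipVar S j) + H := by
        apply G.util_diff j
        intro v hv
        by_cases hvj : v = j
        · subst hvj; simp [flipVar, hp.agree v hv]
        · simp [flipVar, hvj, hp.agree v hv]
      -- the whole change caused by the phase is at most `E * W (i+1)`
      have hcard : ((G.block W (i + 1)).card : ℝ) ≤ G.N.card := by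
        exact_mod_cast Finset.card_le_card (Finset.filter_subset _ _)
      have hH0 : 0 ≤ H := Finset.sum_nonneg fun x _ => G.maxUtil_nonneg x
      have hharm : 9 / 2 * H ≤ E * W (i + 1) := by
        have h3 : ((G.block W (i + 1)).card : ℝ) * W (i + 1) ≤ G.N.card * W (i + 1) :=
          mul_le_mul_of_nonneg_right hcard hWi.le
        have h3' : 0 ≤ (G.N.card : ℝ) * W (i + 1) := by positivity
        have h4 : ε * (E * W (i + 1)) = 185 * (G.N.card * W (i + 1)) := by
          rw [← mul_assoc, mul_comm ε, hE]; ring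
        refine le_of_mul_le_mul_left ?_ hε
        linarith
      have h5 : E * W (i + 1) ≤ E * (2 * W (i + 1) - 2 * W (i + 1 + 1)) := by
        apply mul_le_mul_of_nonneg_left _ hE0
        rw [hWs]
        nlinarith
      have h6 : (3 + ε / 2) * G.util j S ≤ (3 + ε / 2) * (G.util j S' + H) :=
        mul_le_mul_of_nonneg_left h1 (by linarith)
      have h7 : ε * H ≤ 1 * H := mul_le_mul_of_nonneg_right hε1 hH0
      linarith
  · have hlen := hp.length_gain G (m := ε / 21 * W (i + 1 + 1)) (fun T j h => by
      rcases h with h | h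
      · have h1 := G.gain_large hε hε1 h.2
        have h2 := (Finset.mem_filter.1 h.1).2.1
        nlinarith [hW0 (i + 1 + 1)]
      · have h1 := G.gain_small hε hε1 h.2
        have h2 := (Finset.mem_filter.1 h.1).2.1
        nlinarith [hW0 (i + 1 + 1)])
    have hup : G.potential S' - G.potential S ≤ H := by
      refine (G.potential_diff hp.agree).trans (Finset.sum_le_sum fun x _ => ?_)
      linarith [G.util_nonneg x S]
    have h1 : ε * (l.length * (ε / 21 * W (i + 1 + 1))) ≤ ε * H :=
      mul_le_mul_of_nonneg_left (hlen.trans hup) hε.le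
    rw [hWs] at h1
    refine le_of_mul_le_mul_right ?_ hWi
    linarith

/-- The first `M` phases, starting from an initial state for which block `0` is empty. -/
lemma phases (G : PkFlipGame V C k) {W : ℕ → ℝ} {ε r E : ℝ} (hε : 0 < ε) (hε1 : ε ≤ 1)
    (hr : 0 < r) (hr2 : r ≤ 1 / 2) (hW : ∀ i, W (i + 1) = r * W i) (hW0 : ∀ i, 0 < W i)
    (hE : E * ε = 185 * G.N.card) (htop : ∀ j, G.maxUtil j ≤ W 1) (S : V → Bool) (M : ℕ) :
    ∃ l S', Path G.Improving S l S' ∧ G.PhaseInv W ε r E M S' ∧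
      (l.length : ℝ) * (ε ^ 2 * r) ≤
        861 * (G.N.filter fun j => W (M + 1) < G.maxUtil j).card := by
  induction M with
  | zero =>
    have h10 : W 1 ≤ W 0 := by nlinarith [hW 0, hW0 0]
    refine ⟨[], S, .nil S, ⟨?_, ?_⟩, by simp⟩
    · intro j hj
      exact absurd (Finset.mem_filter.1 hj).2.1 (not_lt.2 (htop j))
    · intro j _ hj
      exact absurd hj (not_lt.2 ((htop j).trans h10))
  | succ M ih =>
    obtain ⟨l, S', hp, hinv, hlen⟩ := ih
    obtain ⟨l', S'', hp', hinv', hlen'⟩ := G.phase hε hε1 hr hr2 hW hW0 hE hinv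
    refine ⟨l ++ l', S'', hp.append hp', hinv', ?_⟩
    have hdisj : Disjoint (G.N.filter fun j => W (M + 1) < G.maxUtil j) (G.block W (M + 1)) := by
      rw [Finset.disjoint_left]
      intro j hj hj'
      exact absurd (Finset.mem_filter.1 hj).2 (not_lt.2 (Finset.mem_filter.1 hj').2.2)
    have hsub : (G.N.filter fun j => W (M + 1) < G.maxUtil j) ∪ G.block W (M + 1) ⊆
        G.N.filter fun j => W (M + 1 + 1) < G.maxUtil j := by
      intro j hj
      rcases Finset.mem_union.1 hj with hj | hj
      · have h1 := Finset.mem_filter.1 hj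
        have h2 : W (M + 1 + 1) ≤ W (M + 1) := by nlinarith [hW (M + 1), hW0 (M + 1)]
        exact Finset.mem_filter.2 ⟨h1.1, h2.trans_lt h1.2⟩
      · have h1 := Finset.mem_filter.1 hj
        exact Finset.mem_filter.2 ⟨h1.1, h1.2.1⟩
    have hcard := Finset.card_le_card hsub
    rw [Finset.card_union_of_disjoint hdisj] at hcard
    have hcard' : ((G.N.filter fun j => W (M + 1) < G.maxUtil j).card : ℝ) +
        (G.block W (M + 1)).card ≤ (G.N.filter fun j => W (M + 1 + 1) < G.maxUtil j).card := by
      exact_mod_cast hcard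
    rw [List.length_append]
    push_cast
    linarith

lemma Path.isState {G : PkFlipGame V C k} {S l S'} (h : Path G.Improving S l S')
    (hS : G.IsState S) : G.IsState S' := fun v hv => by
  rw [← hS v hv]
  exact (h.agree v fun hl => hv (h.mem (fun _ _ h => h.1) hl)).symm

/-- The result for arbitrary `P_k`-Flip games, with a bound of order `n²/ε⁴`. -/
lemma exists_short_path (G : PkFlipGame V C k) {ε : ℝ} (hε : 0 < ε) (hε1 : ε ≤ 1)
    {S : V → Bool} (hS : G.IsState S) :
    ∃ l S', Path G.Improving S l S' ∧ G.IsApproxEquilibrium (3 + ε) S' ∧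
      (l.length : ℝ) * ε ^ 4 ≤ 3185700 * (G.N.card : ℝ) ^ 2 := by
  rcases G.N.eq_empty_or_nonempty with hN | hN
  · exact ⟨[], S, .nil S, ⟨hS, by simp [hN]⟩, by simp [hN]⟩
  have hn : (1 : ℝ) ≤ G.N.card := by exact_mod_cast hN.card_pos
  set n : ℝ := (G.N.card : ℝ) with hn'
  -- `r` is chosen so that the total additive error `2 * r * E` equals `ε / 10`
  set r : ℝ := ε ^ 2 / (3700 * n) with hr'
  set E : ℝ := 185 * n / ε with hE'
  have hr : 0 < r := by positivity
  have hrn : r * n = ε ^ 2 / 3700 := by rw [hr']; field_simp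
  have hr2 : r ≤ 1 / 2 := by nlinarith
  have hE : E * ε = 185 * n := by rw [hE']; field_simp
  have hrE : E * (2 * r) = ε / 10 := by rw [hE', hr']; field_simp; norm_num
  have hU0 : 0 ≤ ∑ j, G.maxUtil j := Finset.sum_nonneg fun j _ => G.maxUtil_nonneg j
  -- `W 1` bounds every `U j`, so block `0` is empty
  set W : ℕ → ℝ := fun i => (1 + ∑ j, G.maxUtil j) / r * r ^ i with hWdef
  have hW0 : ∀ i, 0 < W i := fun i => by
    have : 0 < 1 + ∑ j, G.maxUtil j := by linarith
    positivity
  have hW : ∀ i, W (i + 1) = r * W i := fun i => by simp only [hWdef]; ring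
  have htop : ∀ j, G.maxUtil j ≤ W 1 := fun j => by
    have h1 := Finset.single_le_sum (fun x _ => G.maxUtil_nonneg x) (Finset.mem_univ j)
    have h2 : W 1 = 1 + ∑ j, G.maxUtil j := by simp only [hWdef]; field_simp
    linarith
  -- after `M` phases every player with `U j ≠ 0` has been treated
  obtain ⟨M, hM⟩ : ∃ M, ∀ j, 0 < G.maxUtil j → W M < G.maxUtil j := by
    have hlim : Filter.Tendsto W Filter.atTop (nhds 0) := by
      have := (tendsto_pow_atTop_nhds_zero_of_lt_one hr.le (by linarith : r < 1)).const_mul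
        ((1 + ∑ j, G.maxUtil j) / r)
      simpa [hWdef] using this
    have hev : ∀ᶠ M in Filter.atTop, ∀ j, 0 < G.maxUtil j → W M < G.maxUtil j := by
      rw [Filter.eventually_all]
      intro j
      by_cases hj : 0 < G.maxUtil j
      · filter_upwards [hlim.eventually_lt_const hj] with M h _ using h
      · exact Filter.Eventually.of_forall fun M h => absurd h hj
    exact hev.exists
  obtain ⟨l, S', hp, hinv, hlen⟩ := G.phases hε hε1 hr hr2 hW hW0 hE htop S M
  refine ⟨l, S', hp, ⟨hp.isState hS, ?_⟩, ?_⟩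
  · intro j hj
    have hu := G.util_nonneg j S'
    rcases (G.maxUtil_nonneg j).eq_or_lt with h0 | hpos
    · have h1 := G.util_le_maxUtil j (flipVar S' j)
      have : 0 ≤ (3 + ε) * G.util j S' := by positivity
      linarith
    · have h1 := hinv.earlier j hj (hM j hpos)
      have h2 := G.maxUtil_le j S'
      have h3 : 0 ≤ E * (2 * W (M + 1)) := by
        have := hW0 (M + 1)
        positivity
      have h4 : E * (2 * r * G.maxUtil j - 2 * W (M + 1)) ≤ ε / 10 * G.maxUtil j := by
        rw [← hrE]; linarith
      -- hence `U j ≤ 5 * u j`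
      have h5 : G.maxUtil j ≤ 5 * G.util j S' := by nlinarith
      nlinarith
  · have hc : ((G.N.filter fun j => W (M + 1) < G.maxUtil j).card : ℝ) ≤ n := by
      rw [hn']
      exact_mod_cast Finset.card_le_card (Finset.filter_subset _ _)
    have h1 : (l.length : ℝ) * (ε ^ 2 * r) ≤ 861 * n := hlen.trans (by linarith)
    have h2 : (l.length : ℝ) * (ε ^ 2 * r) * n ≤ 861 * n * n :=
      mul_le_mul_of_nonneg_right h1 (by linarith)
    have h3 : (l.length : ℝ) * (ε ^ 2 * r) * n = l.length * ε ^ 4 / 3700 := by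
      rw [show (l.length : ℝ) * (ε ^ 2 * r) * n = l.length * ε ^ 2 * (r * n) by ring, hrn]
      ring
    rw [h3] at h2
    linarith

end PkFlipGame

/-- There is a universal constant `C > 0` such that in every `nae`-`(2,k)`-Flip
game with `n` players, from every initial state there is a sequence of at most
`C·n³·k²/ε⁴` improvement moves ending at a `(3+ε)`-approximate pure Nash
equilibrium, for every `ε ∈ (0,1]`. -/
theorem nae2_short_sequence :
    ∃ Cst : ℝ, 0 < Cst ∧
      ∀ (V C : Type) [Fintype V] [DecidableEq V] [Fintype C] (k : ℕ), 2 ≤ k →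
        ∀ (G : NaeFlipGame V C 2 k) (Sin : V → Bool), G.toPkFlipGame.IsState Sin →
          ∀ ε : ℝ, 0 < ε → ε ≤ 1 →
            ∃ (T : ℕ) (Sq : ℕ → V → Bool),
              (T : ℝ) ≤ Cst * (G.toPkFlipGame.N.card : ℝ) ^ 3 * (k : ℝ) ^ 2 / ε ^ 4 ∧
              Sq 0 = Sin ∧
              (∀ t < T, ∃ j ∈ G.toPkFlipGame.N,
                Sq (t + 1) = flipVar (Sq t) j ∧
                G.toPkFlipGame.util j (Sq t) < G.toPkFlipGame.util j (Sq (t + 1))) ∧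
              G.toPkFlipGame.IsApproxEquilibrium (3 + ε) (Sq T) := by
  refine ⟨3185700, by norm_num, ?_⟩
  intro V C _ _ _ k hk G Sin hS ε hε hε1
  obtain ⟨l, S', hp, heq, hlen⟩ := G.toPkFlipGame.exists_short_path hε hε1 hS
  obtain ⟨Sq, h0, hl, hstep⟩ := hp.exists_seq
  refine ⟨l.length, Sq, ?_, h0, hstep, hl ▸ heq⟩
  rw [le_div_iff₀ (by positivity)]
  refine hlen.trans ?_
  -- `n² ≤ n³ * k²`, also for `n = 0`
  have h1 : G.toPkFlipGame.N.card ^ 2 ≤ G.toPkFlipGame.N.card ^ 3 * k ^ 2 := by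
    rcases Nat.eq_zero_or_pos G.toPkFlipGame.N.card with h | h
    · simp [h]
    · calc G.toPkFlipGame.N.card ^ 2 ≤ G.toPkFlipGame.N.card ^ 3 :=
            Nat.pow_le_pow_right h (by norm_num)
        _ ≤ G.toPkFlipGame.N.card ^ 3 * k ^ 2 :=
            Nat.le_mul_of_pos_right _ (by positivity)
  have h2 : (G.toPkFlipGame.N.card : ℝ) ^ 2 ≤ (G.toPkFlipGame.N.card : ℝ) ^ 3 * (k : ℝ) ^ 2 := by
    exact_mod_cast h1
  linarith
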